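/- arXiv:2312.16146 — 6 statements merged into one kernel-verified Lean document; each statement's English description precedes it below -/
import Mathlib

section
/- Let X be a topological space admitting a co-mixer, i.e., a continuous map τ : X × X × X → X such that τ(a,a,b) = τ(a,b,a) = τ(b,a,a) = b for all a, b ∈ X. Then for every point e ∈ X and every n ≥ 1, every element α of the n-th homotopy group πₙ(X, e) satisfies α * α = 1 (equivalently, 2α = 0 in additive notation). -/
/-!
The multiplication of an H-space acts pointwise on generalized loops at its unit `e`. The operation
it induces on `π_N (X, e)` has the constant loop as unit and commutes with concatenation, so by
Eckmann–Hilton it is the group multiplication, and `α * α` is the class of the pointwise square of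
any representative of `α`. A co-mixer makes `X` an H-space with `a · b = τ a b e`, in which every
square is `e`.
-/

open ContinuousMap
open scoped Topology Topology.Homotopy unitInterval

theorem homotopicRel_comp_genLoop {N X Y : Type*} [TopologicalSpace X] [TopologicalSpace Y] {x : X}
    {f g : C(X, Y)} (h : f.HomotopicRel g {x}) (p : Ω^ N X x) :
    (f.comp p.1).HomotopicRel (g.comp p.1) (Cube.boundary N) :=
  h.map fun H =>
    { toHomotopy := H.toHomotopy.compContinuousMap p.1
      prop' := fun t y hy => H.eq_fst t (p.2 y hy) }

section HSpace

variable {N X : Type*} [TopologicalSpace X] [HSpace X]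

/-- The pointwise product of two generalized loops based at the unit of an H-space. -/
def genLoopHMul (p q : Ω^ N X HSpace.e) : Ω^ N X HSpace.e :=
  ⟨HSpace.hmul.comp (p.1.prodMk q.1), fun y hy =>
    (congrArg HSpace.hmul (Prod.ext (p.2 y hy) (q.2 y hy))).trans HSpace.hmul_e_e⟩

theorem genLoopHMul_apply (p q : Ω^ N X HSpace.e) (y : I^N) :
    genLoopHMul p q y = HSpace.hmul (p y, q y) :=
  rfl

theorem genLoopHMul_homotopic {p p' q q' : Ω^ N X HSpace.e} (hp : GenLoop.Homotopic p p')
    (hq : GenLoop.Homotopic q q') : GenLoop.Homotopic (genLoopHMul p q) (genLoopHMul p' q') :=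
  HomotopicRel.comp_continuousMap (hp.map2 HomotopyRel.prod hq) HSpace.hmul

theorem genLoopHMul_const_left_homotopic (p : Ω^ N X HSpace.e) :
    GenLoop.Homotopic (genLoopHMul GenLoop.const p) p :=
  homotopicRel_comp_genLoop ⟨HSpace.eHmul⟩ p

theorem genLoopHMul_const_right_homotopic (p : Ω^ N X HSpace.e) :
    GenLoop.Homotopic (genLoopHMul p GenLoop.const) p :=
  homotopicRel_comp_genLoop ⟨HSpace.hmulE⟩ p

theorem genLoopHMul_transAt [DecidableEq N] (i : N) (p p' q q' : Ω^ N X HSpace.e) :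
    genLoopHMul (GenLoop.transAt i p p') (GenLoop.transAt i q q') =
      GenLoop.transAt i (genLoopHMul p q) (genLoopHMul p' q') := by
  ext y
  simp only [genLoopHMul_apply, GenLoop.transAt, GenLoop.coe_copy]
  split_ifs <;> rfl

/-- The operation on `π_N (X, e)` induced by the multiplication of an H-space `X` with unit `e`. -/
def homotopyGroupHMul :
    HomotopyGroup N X HSpace.e → HomotopyGroup N X HSpace.e → HomotopyGroup N X HSpace.e :=
  Quotient.map₂ genLoopHMul fun _ _ hp _ _ hq => genLoopHMul_homotopic hp hq

variable [DecidableEq N] [Nonempty N]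

theorem isUnital_homotopyGroupHMul :
    EckmannHilton.IsUnital homotopyGroupHMul (1 : HomotopyGroup N X HSpace.e) where
  left_id := Quotient.ind fun p => Quotient.sound (genLoopHMul_const_left_homotopic p)
  right_id := Quotient.ind fun p => Quotient.sound (genLoopHMul_const_right_homotopic p)

theorem homotopyGroupHMul_mul_mul (α β γ δ : HomotopyGroup N X HSpace.e) :
    homotopyGroupHMul (α * β) (γ * δ) = homotopyGroupHMul α γ * homotopyGroupHMul β δ := by
  induction α, β using Quotient.inductionOn₂ with | _ p p'
  induction γ, δ using Quotient.inductionOn₂ with | _ q q'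
  let i := Classical.arbitrary N
  have transAt_factors := congrArg₂ homotopyGroupHMul
    (HomotopyGroup.mul_spec (i := i) (p := p) (q := p'))
    (HomotopyGroup.mul_spec (i := i) (p := q) (q := q'))
  have interchange : ⟦genLoopHMul (GenLoop.transAt i p' p) (GenLoop.transAt i q' q)⟧ =
      (⟦GenLoop.transAt i (genLoopHMul p' q') (genLoopHMul p q)⟧ : HomotopyGroup N X HSpace.e) :=
    congrArg _ (genLoopHMul_transAt i p' p q' q)
  exact transAt_factors.trans (interchange.trans HomotopyGroup.mul_spec.symm)

theorem homotopyGroupHMul_eq_mul (α β : HomotopyGroup N X HSpace.e) :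
    homotopyGroupHMul α β = α * β :=
  congrFun₂ (EckmannHilton.mul isUnital_homotopyGroupHMul EckmannHilton.MulOneClass.isUnital
    homotopyGroupHMul_mul_mul) α β

theorem comixer_homotopyGroup_sq_eq_one_general
    (hsq : (HSpace.hmul.comp ((ContinuousMap.id X).prodMk (ContinuousMap.id X))).HomotopicRel
      (const X HSpace.e) {HSpace.e})
    (α : HomotopyGroup N X HSpace.e) : α * α = 1 := by
  rw [← homotopyGroupHMul_eq_mul]
  induction α using Quotient.inductionOn with | _ p
  exact Quotient.sound (homotopicRel_comp_genLoop hsq p)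

end HSpace

/-- The H-space structure given by a continuous binary operation with a strict unit. -/
abbrev hSpaceOfUnital {X : Type*} [TopologicalSpace X] (m : C(X × X, X)) (e : X)
    (left_id : ∀ a, m (e, a) = a) (right_id : ∀ a, m (a, e) = a) : HSpace X where
  hmul := m
  e := e
  hmul_e_e := left_id e
  eHmul := (HomotopyRel.refl _ _).cast rfl (ContinuousMap.ext left_id)
  hmulE := (HomotopyRel.refl _ _).cast rfl (ContinuousMap.ext right_id)

/-- If a topological space `X` admits a co-mixer — a continuous ternary operation `τ`
with `τ a a b = τ a b a = τ b a a = b` for all `a b` — then every element of every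
homotopy group `πₙ(X, e)` (`n ≥ 1`) squares to the identity. -/
theorem comixer_homotopyGroup_sq_eq_one {X : Type*} [TopologicalSpace X]
    (τ : X → X → X → X)
    (hτ : Continuous fun p : X × X × X => τ p.1 p.2.1 p.2.2)
    (h1 : ∀ a b : X, τ a a b = b)
    (h2 : ∀ a b : X, τ a b a = b)
    (h3 : ∀ a b : X, τ b a a = b)
    (e : X) (n : ℕ) (α : HomotopyGroup (Fin (n + 1)) X e) :
    α * α = 1 := by
  let m : C(X × X, X) := ⟨fun p => τ p.1 p.2 e,
    hτ.comp (by fun_prop : Continuous fun p : X × X => (p.1, p.2, e))⟩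
  let : HSpace X := hSpaceOfUnital m e (h2 e) (h3 e)
  have sq_eq_const : m.comp ((ContinuousMap.id X).prodMk (ContinuousMap.id X)) = const X e :=
    ContinuousMap.ext fun a => h1 a e
  exact comixer_homotopyGroup_sq_eq_one_general (sq_eq_const ▸ .refl _) α
end

section
/- Let (X, d) be a metric space and φ : [0,1] → X a homeomorphism from the unit interval onto X with φ(0) = a and φ(1) = b. Suppose the total variation of φ on [0,1] is infinite, but the total variation of φ on [ε, 1] is finite for every ε > 0. Then every Lipschitz map f : X → X with f(b) = a is constant, identically equal to a. -/
open scoped NNReal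

/-!
Read `f` in the parameter: `g = φ⁻¹ ∘ f ∘ φ` is a continuous self-map of `[0,1]` with `g 1 = 0`,
and `φ ∘ g = f ∘ φ` has finite variation on `[s,1]` for every `s > 0`. On its way from `g s` down
to `0`, `g` sweeps out all of `[0, g s]`, so `φ` has finite variation on `[0, g s]`. If `g s` were
positive, `φ` would have finite variation on `[g s, 1]` too, hence on `[0,1]`. So `g` vanishes on
`(0,1]`, and at `0` by continuity.
-/

open Set

section Sweep

variable {α β E : Type*} [ConditionallyCompleteLinearOrder α] [DenselyOrdered α]
  [TopologicalSpace α] [OrderTopology α] [LinearOrder β] [TopologicalSpace β]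
  [OrderClosedTopology β] [PseudoEMetricSpace E] {g : α → β} {s t : α}

lemma exists_antitoneOn_mapsTo_rightInvOn_Icc (hst : s ≤ t) (hg : ContinuousOn g (Icc s t)) :
    ∃ v : β → α, AntitoneOn v (Icc (g t) (g s)) ∧ MapsTo v (Icc (g t) (g s)) (Icc s t) ∧
      RightInvOn v g (Icc (g t) (g s)) := by
  -- From the last time that `g` is at least `y` until `t`, `g` must pass through `y`; it can only
  -- do so at that last time itself.
  let v (y : β) : α := sSup (Icc s t ∩ g ⁻¹' Ici y)
  have hv : ∀ y ∈ Icc (g t) (g s), IsGreatest (Icc s t ∩ g ⁻¹' Ici y) (v y) := fun y hy ↦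
    (isCompact_Icc.of_isClosed_subset (hg.preimage_isClosed_of_isClosed isClosed_Icc isClosed_Ici)
      inter_subset_left).isGreatest_sSup ⟨s, left_mem_Icc.2 hst, hy.2⟩
  have hmaps : MapsTo v (Icc (g t) (g s)) (Icc s t) := fun y hy ↦ (hv y hy).1.1
  refine ⟨v, fun y hy z hz hyz ↦ (hv y hy).2 ⟨hmaps hz, hyz.trans (hv z hz).1.2⟩, hmaps,
    fun y hy ↦ ?_⟩
  have hsub : Icc (v y) t ⊆ Icc s t := Icc_subset_Icc_left (hmaps hy).1
  obtain ⟨w, hw, hgw⟩ : y ∈ g '' Icc (v y) t :=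
    intermediate_value_Icc' (hmaps hy).2 (hg.mono hsub) ⟨hy.1, (hv y hy).1.2⟩
  have hwv : w ≤ v y := (hv y hy).2 ⟨hsub hw, hgw.ge⟩
  rw [← le_antisymm hwv hw.1, hgw]

lemma eVariationOn_Icc_le_comp (p : β → E) (hst : s ≤ t) (hg : ContinuousOn g (Icc s t)) :
    eVariationOn p (Icc (g t) (g s)) ≤ eVariationOn (p ∘ g) (Icc s t) := by
  obtain ⟨v, hanti, hmaps, hinv⟩ := exists_antitoneOn_mapsTo_rightInvOn_Icc hst hg
  calc eVariationOn p (Icc (g t) (g s))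
      = eVariationOn ((p ∘ g) ∘ v) (Icc (g t) (g s)) :=
        eVariationOn.congr fun y hy ↦ congrArg p (hinv hy).symm
    _ ≤ eVariationOn (p ∘ g) (Icc s t) := eVariationOn.comp_le_of_antitoneOn _ v hanti hmaps

lemma eq_bot_of_eVariationOn_comp_ne_top [OrderBot β] {p : β → E}
    (hp : eVariationOn p univ = ⊤) (hpr : ∀ r, ⊥ < r → eVariationOn p (Ici r) ≠ ⊤)
    (hst : s ≤ t) (hg : ContinuousOn g (Icc s t)) (hgt : g t = ⊥)
    (hpg : eVariationOn (p ∘ g) (Icc s t) ≠ ⊤) : g s = ⊥ := by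
  by_contra hgs
  have hIic : eVariationOn p (Iic (g s)) ≠ ⊤ := by
    rw [← Icc_bot, ← hgt]
    exact ne_top_of_le_ne_top hpg (eVariationOn_Icc_le_comp p hst hg)
  have hsplit : eVariationOn p univ = eVariationOn p (Iic (g s)) + eVariationOn p (Ici (g s)) := by
    rw [← Iic_union_Ici, eVariationOn.union p isGreatest_Iic isLeast_Ici]
  exact ENNReal.add_ne_top.2 ⟨hIic, hpr _ (bot_lt_iff_ne_bot.2 hgs)⟩ (hsplit.symm.trans hp)

end Sweep

theorem lipschitz_map_on_unrectifiable_arc_const_general {X : Type*} [PseudoEMetricSpace X]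
    (φ : unitInterval ≃ₜ X) (hφ : eVariationOn φ univ = ⊤)
    (hφr : ∀ r, 0 < r → eVariationOn φ (Ici r) ≠ ⊤) {f : X → X} (hf : Continuous f)
    (hf₁ : f (φ 1) = φ 0) (hfr : ∀ r, 0 < r → eVariationOn (f ∘ φ) (Ici r) ≠ ⊤) (x : X) :
    f x = φ 0 := by
  let g : unitInterval → unitInterval := φ.symm ∘ f ∘ φ
  have hg : Continuous g := φ.symm.continuous.comp (hf.comp φ.continuous)
  have hφg : φ ∘ g = f ∘ φ := funext fun t ↦ φ.apply_symm_apply _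
  have hg₁ : g 1 = 0 := φ.symm_apply_eq.2 hf₁
  have hg_pos : EqOn g 0 (Ioi 0) := fun s hs ↦
    eq_bot_of_eVariationOn_comp_ne_top hφ hφr unitInterval.le_one' hg.continuousOn hg₁ <| by
      rw [hφg]
      exact ne_top_of_le_ne_top (hfr s hs) (eVariationOn.mono _ Icc_subset_Ici_self)
  have hdense : Dense (Ioi (0 : unitInterval)) := fun t ↦ by
    rw [closure_Ioi' ⟨1, zero_lt_one⟩]
    exact unitInterval.nonneg'
  have hg_zero : g = 0 := hg.ext_on hdense continuous_const hg_pos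
  obtain ⟨t, rfl⟩ := φ.surjective x
  exact φ.symm_apply_eq.1 (congrFun hg_zero t)

/-- If `X` is a metric arc, parametrized by a homeomorphism `φ : [0,1] ≃ₜ X` with endpoints
`a = φ 0`, `b = φ 1`, which is unrectifiable but whose restriction to `[ε, 1]` is rectifiable
for every `ε > 0`, then any Lipschitz self-map of `X` sending `b` to `a` is identically `a`. -/
theorem lipschitz_map_on_unrectifiable_arc_const {X : Type*} [MetricSpace X]
    (φ : Set.Icc (0 : ℝ) 1 ≃ₜ X) (a b : X)
    (ha : φ ⟨0, by norm_num⟩ = a) (hb : φ ⟨1, by norm_num⟩ = b)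
    (hvar : eVariationOn (fun t => φ t) Set.univ = ⊤)
    (hvarε : ∀ ε : ℝ, 0 < ε →
      eVariationOn (fun t => φ t) {t : Set.Icc (0 : ℝ) 1 | ε ≤ (t : ℝ)} ≠ ⊤)
    (f : X → X) (K : ℝ≥0) (hf : LipschitzWith K f) (hfb : f b = a) :
    ∀ x : X, f x = a := by
  subst ha hb
  have hfr (r : unitInterval) (hr : 0 < r) : eVariationOn (f ∘ φ) (Ici r) ≠ ⊤ :=
    ne_top_of_le_ne_top (ENNReal.mul_ne_top ENNReal.coe_ne_top (hvarε r hr))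
      (hf.lipschitzOnWith.comp_eVariationOn_le (mapsTo_univ _ _))
  exact lipschitz_map_on_unrectifiable_arc_const_general φ hvar (fun r hr ↦ hvarε r hr)
    hf.continuous hfb hfr
end

section
/- Let (X, d) be a metric space and φ : [0,1] → X a homeomorphism from the unit interval onto X such that the total variation of φ on [0,1] is infinite while the total variation of φ on [ε, 1] is finite for every ε > 0. Then X admits no Lipschitz co-mixer: there is no constant L ≥ 0 and map τ : X × X × X → X that is L-Lipschitz in each variable separately and satisfies τ(a,a,b) = τ(a,b,a) = τ(b,a,a) = b for all a, b ∈ X. -/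
open scoped NNReal

/-!
Freezing the last two arguments of a co-mixer at `x` and `y` gives a Lipschitz self-map `F` that
swaps `x` and `y`. Take `x = φ a`, where `a` is the parameter at which rectifiability breaks down,
and `y = φ b` with `a < b`, and read `F` as a continuous self-map `g` of the parameter line, so
that `g a = b` and `g b = a`. For `t > a` close to `a` we still have `g t > a`. Over `[t, b]` the
path `F ∘ φ = φ ∘ g` has finite length, being the Lipschitz image of a rectifiable path; but `g`
runs there from `g t` down to `a`, so this path traverses all of `φ([a, g t])`, which has infinite
length.
-/

open Set Filter Topology

section LastExit

variable {α β E : Type*} [ConditionallyCompleteLinearOrder α] [TopologicalSpace α]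
  [OrderTopology α] [DenselyOrdered α] [LinearOrder β] [TopologicalSpace β]
  [OrderClosedTopology β] [PseudoEMetricSpace E] {a b : α} {g : α → β}

theorem exists_antitoneOn_rightInvOn_Icc (hab : a ≤ b) (hg : ContinuousOn g (Icc a b)) :
    ∃ r : β → α, AntitoneOn r (Icc (g b) (g a)) ∧ MapsTo r (Icc (g b) (g a)) (Icc a b) ∧
      RightInvOn r g (Icc (g b) (g a)) := by
  -- `r u` is the last time at which `g` is at least `u`.
  have exists_last : ∀ u ∈ Icc (g b) (g a), ∃ x, IsGreatest (Icc a b ∩ g ⁻¹' Ici u) x :=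
    fun u hu => (isCompact_Icc.of_isClosed_subset
      (hg.preimage_isClosed_of_isClosed isClosed_Icc isClosed_Ici)
      inter_subset_left).exists_isGreatest ⟨a, left_mem_Icc.2 hab, hu.2⟩
  have : Nonempty α := ⟨a⟩
  choose! r hr using exists_last
  refine ⟨r, fun u hu v hv huv => (hr u hu).2 ⟨(hr v hv).1.1, huv.trans (hr v hv).1.2⟩,
    fun u hu => (hr u hu).1.1, fun u hu => ?_⟩
  obtain ⟨⟨hru, hur⟩, hlast⟩ := hr u hu
  obtain ⟨x, hx, rfl⟩ :=
    intermediate_value_Icc' hru.2 (hg.mono (Icc_subset_Icc_left hru.1)) ⟨hu.1, hur⟩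
  exact congrArg g (hx.1.antisymm (hlast ⟨⟨hru.1.trans hx.1, hx.2⟩, le_rfl⟩))

theorem eVariationOn_Icc_le_eVariationOn_comp (f : β → E) (hab : a ≤ b)
    (hg : ContinuousOn g (Icc a b)) :
    eVariationOn f (Icc (g b) (g a)) ≤ eVariationOn (f ∘ g) (Icc a b) := by
  obtain ⟨r, hanti, hmaps, hinv⟩ := exists_antitoneOn_rightInvOn_Icc hab hg
  calc eVariationOn f (Icc (g b) (g a))
      = eVariationOn ((f ∘ g) ∘ r) (Icc (g b) (g a)) :=
        eVariationOn.congr fun u hu => congrArg f (hinv hu).symm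
    _ ≤ eVariationOn (f ∘ g) (Icc a b) := eVariationOn.comp_le_of_antitoneOn _ r hanti hmaps

end LastExit

theorem locallyBoundedVariationOn_Ici_of_Icc_of_Ioi {α E : Type*} [LinearOrder α]
    [PseudoEMetricSpace E] {f : α → E} {a s : α} (has : a < s)
    (hIcc : BoundedVariationOn f (Icc a s)) (hIoi : LocallyBoundedVariationOn f (Ioi a)) :
    LocallyBoundedVariationOn f (Ici a) := by
  intro x y _ _
  have hs : s ≤ max s y := le_max_left s y
  have hright : BoundedVariationOn f (Icc s (max s y)) :=
    (hIoi s (max s y) has (has.trans_le hs)).mono fun u hu => ⟨has.trans_le hu.1, hu⟩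
  have hunion : BoundedVariationOn f (Icc a s ∪ Icc s (max s y)) := by
    rw [BoundedVariationOn, eVariationOn.union f (isGreatest_Icc has.le) (isLeast_Icc hs)]
    exact ENNReal.add_ne_top.2 ⟨hIcc, hright⟩
  rw [Icc_union_Icc_eq_Icc has.le hs] at hunion
  exact hunion.mono fun u hu => ⟨hu.1, hu.2.2.trans (le_max_right s y)⟩

section Swap

variable {α : Type*} [ConditionallyCompleteLinearOrder α] [TopologicalSpace α] [OrderTopology α]
  [DenselyOrdered α] {a b : α}

theorem locallyBoundedVariationOn_Ici_of_comp {E : Type*} [PseudoEMetricSpace E] {f : α → E}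
    {g : α → α} (hab : a < b) (hg : ContinuousOn g (Icc a b)) (hga : a < g a) (hgb : g b ≤ a)
    (hf : LocallyBoundedVariationOn f (Ioi a))
    (hfg : LocallyBoundedVariationOn (f ∘ g) (Ioi a)) :
    LocallyBoundedVariationOn f (Ici a) := by
  obtain ⟨t, hgt, hat, htb⟩ : ∃ t, a < g t ∧ t ∈ Ioo a b := by
    have := left_nhdsWithin_Ioo_neBot hab
    have hcont : ContinuousWithinAt g (Ioo a b) a :=
      (hg a (left_mem_Icc.2 hab.le)).mono Ioo_subset_Icc_self
    exact ((hcont.eventually_const_lt hga).and self_mem_nhdsWithin).exists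
  have hcomp : BoundedVariationOn (f ∘ g) (Icc t b) :=
    (hfg t b hat hab).mono fun u hu => ⟨hat.trans_le hu.1, hu⟩
  have hIcc : BoundedVariationOn f (Icc (g b) (g t)) :=
    ne_top_of_le_ne_top hcomp <| eVariationOn_Icc_le_eVariationOn_comp f htb.le <|
      hg.mono (Icc_subset_Icc_left hat.le)
  exact locallyBoundedVariationOn_Ici_of_Icc_of_Ioi hgt (hIcc.mono (Icc_subset_Icc_left hgb)) hf

theorem locallyBoundedVariationOn_Ici_of_lipschitzWith_swap {X : Type*} [PseudoEMetricSpace X]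
    (φ : α ≃ₜ X) {F : X → X} {L : ℝ≥0} (hF : LipschitzWith L F) (hab : a < b)
    (hFa : F (φ a) = φ b) (hFb : F (φ b) = φ a) (hφ : LocallyBoundedVariationOn φ (Ioi a)) :
    LocallyBoundedVariationOn φ (Ici a) := by
  have hsemiconj : φ ∘ (φ.symm ∘ F ∘ φ) = F ∘ φ := funext fun t => φ.apply_symm_apply _
  refine locallyBoundedVariationOn_Ici_of_comp (g := φ.symm ∘ F ∘ φ) hab ?_ ?_ ?_ hφ ?_
  · exact (φ.symm.continuous.comp (hF.continuous.comp φ.continuous)).continuousOn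
  · simpa [hFa] using hab
  · simp [hFb]
  · rw [hsemiconj]
    exact hF.comp_locallyBoundedVariationOn hφ

theorem unrectifiable_arc_no_lipschitz_comixer_general {X : Type*} [PseudoEMetricSpace X]
    (φ : α ≃ₜ X) (hvar : ¬ LocallyBoundedVariationOn φ (Ici a))
    (hvarIoi : LocallyBoundedVariationOn φ (Ioi a)) :
    ¬ ∃ τ : X → X → X → X,
        (∀ y z : X, ∃ L : ℝ≥0, LipschitzWith L fun x => τ x y z) ∧
        (∀ x y : X, τ x x y = y) ∧ (∀ x y : X, τ x y x = y) := by
  rintro ⟨τ, hL, hxxy, hxyx⟩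
  obtain ⟨b, hab⟩ : ∃ b, a < b := by
    refine not_isMax_iff.1 fun hmax => hvar ?_
    rw [hmax.Ici_eq]
    exact (BoundedVariationOn.of_subsingleton subsingleton_singleton).locallyBoundedVariationOn
  obtain ⟨L, hF⟩ := hL (φ a) (φ b)
  exact hvar <| locallyBoundedVariationOn_Ici_of_lipschitzWith_swap φ hF hab
    (hxxy (φ a) (φ b)) (hxyx (φ b) (φ a)) hvarIoi

end Swap

/-- A metric arc `X` (homeomorphic image of `[0,1]`) that is unrectifiable but whose
subarcs `φ([ε,1])`, `ε > 0`, are all rectifiable admits no Lipschitz co-mixer. -/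
theorem unrectifiable_arc_no_lipschitz_comixer {X : Type*} [MetricSpace X]
    (φ : Set.Icc (0 : ℝ) 1 ≃ₜ X)
    (hvar : eVariationOn (fun t => φ t) Set.univ = ⊤)
    (hvarε : ∀ ε : ℝ, 0 < ε →
      eVariationOn (fun t => φ t) {t : Set.Icc (0 : ℝ) 1 | ε ≤ (t : ℝ)} ≠ ⊤) :
    ¬ ∃ (L : ℝ≥0) (τ : X → X → X → X),
        (∀ b c : X, LipschitzWith L fun a => τ a b c) ∧
        (∀ a c : X, LipschitzWith L fun b => τ a b c) ∧
        (∀ a b : X, LipschitzWith L fun c => τ a b c) ∧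
        (∀ a b : X, τ a a b = b) ∧ (∀ a b : X, τ a b a = b) ∧ (∀ a b : X, τ b a a = b) := by
  rintro ⟨L, τ, hL, -, -, haab, haba, -⟩
  have hvarIci : ¬ LocallyBoundedVariationOn φ (Ici 0) := fun h =>
    (h 0 1 self_mem_Ici (mem_Ici.2 zero_le_one)).mono (fun t _ => ⟨t.2.1, t.2⟩) hvar
  have hvarIoi : LocallyBoundedVariationOn φ (Ioi 0) := fun s _ hs _ =>
    BoundedVariationOn.mono (hvarε s hs) fun _ ht => ht.2.1
  exact unrectifiable_arc_no_lipschitz_comixer_general φ hvarIci hvarIoi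
    ⟨τ, fun b c => ⟨L, hL b c⟩, haab, haba⟩
end

section
/- Let X be a real normed space and define the incenter mixer σ : X × X × X → X by σ(a,b,c) = (‖b-c‖·a + ‖a-c‖·b + ‖a-b‖·c) / (‖b-c‖ + ‖a-c‖ + ‖a-b‖) whenever a, b, c are not all equal, and σ(a,a,a) = a. Then σ is 1-Lipschitz in each variable separately; in particular, ‖σ(a,b,c) - σ(a,b,c')‖ ≤ ‖c - c'‖ for all a, b, c, c' ∈ X. -/
/-!
Fix `a` and `b`, let `S` and `S'` be the perimeters of the triangles `a b c` and `a b c'`, and let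
`s = σ(a,b,c)`, `s' = σ(a,b,c')`. Clearing denominators in the definition of `σ` gives
`S' (s - s') = (‖b - c‖ - ‖b - c'‖) (a - s) + (‖a - c‖ - ‖a - c'‖) (b - s) + ‖a - b‖ (c - c')`,
so `S' ‖s - s'‖` is at most `‖c - c'‖` times the perimeter of the triangle `a b s`. As `s` lies in
the convex hull of `a, b, c` and the perimeter is a convex function of the third vertex, that
perimeter is at most `S`. Hence `S' ‖s - s'‖ ≤ S ‖c - c'‖`; adding the inequality with `c` and `c'`
exchanged yields `(S + S') ‖s - s'‖ ≤ (S + S') ‖c - c'‖`.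
-/

open scoped Classical in
/-- The incenter mixer on a real normed space:
`σ(a,b,c) = (‖b-c‖a + ‖a-c‖b + ‖a-b‖c)/(‖b-c‖ + ‖a-c‖ + ‖a-b‖)` for `a, b, c` not all
equal, and `σ(a,a,a) = a`. -/
noncomputable def incenterMixer {X : Type*} [NormedAddCommGroup X] [NormedSpace ℝ X]
    (a b c : X) : X :=
  if a = b ∧ b = c then a
  else (‖b - c‖ + ‖a - c‖ + ‖a - b‖)⁻¹ • (‖b - c‖ • a + ‖a - c‖ • b + ‖a - b‖ • c)

section Perimeter

variable {P : Type*} [PseudoMetricSpace P]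

/-- The perimeter of the (possibly degenerate) triangle with vertices `a`, `b`, `c`; in a normed
space it is the denominator of `incenterMixer a b c`. -/
def trianglePerimeter (a b c : P) : ℝ :=
  dist b c + dist a c + dist a b

theorem trianglePerimeter_nonneg (a b c : P) : 0 ≤ trianglePerimeter a b c := by
  unfold trianglePerimeter
  positivity

theorem trianglePerimeter_swap_left (a b c : P) :
    trianglePerimeter a b c = trianglePerimeter b a c := by
  rw [trianglePerimeter, trianglePerimeter, dist_comm b a, add_comm (dist b c)]

theorem trianglePerimeter_swap_right (a b c : P) :
    trianglePerimeter a b c = trianglePerimeter a c b := by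
  rw [trianglePerimeter, trianglePerimeter, dist_comm c b, add_right_comm]

theorem trianglePerimeter_self_left_le (a b c : P) :
    trianglePerimeter a b a ≤ trianglePerimeter a b c := by
  unfold trianglePerimeter
  linarith [dist_triangle_right a b c, dist_comm b a, dist_self a]

theorem trianglePerimeter_self_right_le (a b c : P) :
    trianglePerimeter a b b ≤ trianglePerimeter a b c := by
  unfold trianglePerimeter
  linarith [dist_triangle_right a b c, dist_self b]

theorem trianglePerimeter_eq_zero {M : Type*} [MetricSpace M] {a b c : M} :
    trianglePerimeter a b c = 0 ↔ a = b ∧ b = c := by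
  constructor
  · intro h
    unfold trianglePerimeter at h
    have hbc : 0 ≤ dist b c := dist_nonneg
    have hac : 0 ≤ dist a c := dist_nonneg
    have hab : 0 ≤ dist a b := dist_nonneg
    exact ⟨dist_eq_zero.1 (by linarith), dist_eq_zero.1 (by linarith)⟩
  · rintro ⟨rfl, rfl⟩
    simp [trianglePerimeter]

variable {E : Type*} [SeminormedAddCommGroup E] [NormedSpace ℝ E]

theorem convexOn_trianglePerimeter (a b : E) :
    ConvexOn ℝ Set.univ (trianglePerimeter a b) := by
  have h := ((convexOn_univ_dist b).add (convexOn_univ_dist a)).add_const (dist a b)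
  refine h.congr fun c _ ↦ ?_
  simp only [trianglePerimeter, Pi.add_apply, dist_comm c]

theorem trianglePerimeter_le_of_mem_convexHull {a b c x : E}
    (hx : x ∈ convexHull ℝ {a, b, c}) : trianglePerimeter a b x ≤ trianglePerimeter a b c := by
  obtain ⟨y, hy, hxy⟩ :=
    (convexOn_trianglePerimeter a b).exists_ge_of_mem_convexHull (Set.subset_univ _) hx
  rcases hy with rfl | rfl | rfl
  · exact hxy.trans (trianglePerimeter_self_left_le y b c)
  · exact hxy.trans (trianglePerimeter_self_right_le a y c)
  · exact hxy

end Perimeter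

section IncenterMixer

variable {X : Type*} [NormedAddCommGroup X] [NormedSpace ℝ X]

theorem incenterMixer_self (a : X) : incenterMixer a a a = a :=
  if_pos ⟨rfl, rfl⟩

theorem incenterMixer_of_trianglePerimeter_ne_zero {a b c : X}
    (h : trianglePerimeter a b c ≠ 0) :
    incenterMixer a b c =
      (trianglePerimeter a b c)⁻¹ • (dist b c • a + dist a c • b + dist a b • c) := by
  rw [Ne, trianglePerimeter_eq_zero] at h
  simp only [incenterMixer, if_neg h, trianglePerimeter, dist_eq_norm]

theorem trianglePerimeter_smul_incenterMixer (a b c : X) :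
    trianglePerimeter a b c • incenterMixer a b c = dist b c • a + dist a c • b + dist a b • c := by
  by_cases h : trianglePerimeter a b c = 0
  · obtain ⟨rfl, rfl⟩ := trianglePerimeter_eq_zero.1 h
    simp [h]
  · rw [incenterMixer_of_trianglePerimeter_ne_zero h, smul_inv_smul₀ h]

theorem incenterMixer_mem_convexHull (a b c : X) :
    incenterMixer a b c ∈ convexHull ℝ {a, b, c} := by
  by_cases h : trianglePerimeter a b c = 0
  · obtain ⟨rfl, rfl⟩ := trianglePerimeter_eq_zero.1 h
    simp [incenterMixer_self]
  · have hpos := (trianglePerimeter_nonneg a b c).lt_of_ne' h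
    have hmem := Finset.univ.centerMass_mem_convexHull (R := ℝ) (s := {a, b, c})
      (w := ![dist b c, dist a c, dist a b]) (z := ![a, b, c])
      (by simp [Fin.forall_fin_succ, dist_nonneg])
      (by simpa [Fin.sum_univ_three, trianglePerimeter] using hpos)
      (by simp [Fin.forall_fin_succ])
    simpa [Finset.centerMass, Fin.sum_univ_three, incenterMixer_of_trianglePerimeter_ne_zero h,
      trianglePerimeter] using hmem

theorem incenterMixer_swap_left (a b c : X) : incenterMixer a b c = incenterMixer b a c := by
  by_cases h : trianglePerimeter a b c = 0
  · obtain ⟨rfl, rfl⟩ := trianglePerimeter_eq_zero.1 h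
    rfl
  · have hswap := trianglePerimeter_swap_left a b c
    rw [incenterMixer_of_trianglePerimeter_ne_zero h,
      incenterMixer_of_trianglePerimeter_ne_zero (hswap ▸ h), hswap, dist_comm b a,
      add_comm (dist b c • a)]

theorem incenterMixer_swap_right (a b c : X) : incenterMixer a b c = incenterMixer a c b := by
  by_cases h : trianglePerimeter a b c = 0
  · obtain ⟨rfl, rfl⟩ := trianglePerimeter_eq_zero.1 h
    rfl
  · have hswap := trianglePerimeter_swap_right a b c
    rw [incenterMixer_of_trianglePerimeter_ne_zero h,
      incenterMixer_of_trianglePerimeter_ne_zero (hswap ▸ h), hswap, dist_comm c b,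
      add_right_comm (dist b c • a)]

theorem trianglePerimeter_smul_incenterMixer_sub (a b c c' : X) :
    trianglePerimeter a b c' • (incenterMixer a b c - incenterMixer a b c') =
      (dist b c - dist b c') • (a - incenterMixer a b c)
        + (dist a c - dist a c') • (b - incenterMixer a b c) + dist a b • (c - c') := by
  have hs := trianglePerimeter_smul_incenterMixer a b c
  have hs' := trianglePerimeter_smul_incenterMixer a b c'
  unfold trianglePerimeter at *
  linear_combination (norm := module) hs - hs'

theorem trianglePerimeter_mul_dist_incenterMixer_le (a b c c' : X) :
    trianglePerimeter a b c' * dist (incenterMixer a b c) (incenterMixer a b c') ≤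
      trianglePerimeter a b c * dist c c' := by
  set s := incenterMixer a b c
  set s' := incenterMixer a b c'
  calc trianglePerimeter a b c' * dist s s'
      = ‖trianglePerimeter a b c' • (s - s')‖ := by
        rw [norm_smul, Real.norm_of_nonneg (trianglePerimeter_nonneg a b c'), dist_eq_norm]
    _ ≤ ‖(dist b c - dist b c') • (a - s)‖ + ‖(dist a c - dist a c') • (b - s)‖
          + ‖dist a b • (c - c')‖ := by
        rw [trianglePerimeter_smul_incenterMixer_sub]
        exact norm_add₃_le
    _ = dist (dist b c) (dist b c') * dist a s + dist (dist a c) (dist a c') * dist b s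
          + dist a b * dist c c' := by
        simp only [norm_smul, ← dist_eq_norm, Real.norm_of_nonneg dist_nonneg]
    _ ≤ dist c c' * dist a s + dist c c' * dist b s + dist a b * dist c c' := by
        gcongr <;> exact dist_dist_dist_le_right _ _ _
    _ = trianglePerimeter a b s * dist c c' := by
        rw [trianglePerimeter]
        ring
    _ ≤ trianglePerimeter a b c * dist c c' := by
        gcongr
        exact trianglePerimeter_le_of_mem_convexHull (incenterMixer_mem_convexHull a b c)

theorem dist_incenterMixer_right_le (a b c c' : X) :
    dist (incenterMixer a b c) (incenterMixer a b c') ≤ dist c c' := by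
  have hS := trianglePerimeter_nonneg a b c
  have hS' := trianglePerimeter_nonneg a b c'
  rcases (add_nonneg hS hS').eq_or_lt' with hzero | hpos
  · obtain ⟨rfl, rfl⟩ := trianglePerimeter_eq_zero.1 (by linarith : trianglePerimeter a b c = 0)
    obtain ⟨-, rfl⟩ := trianglePerimeter_eq_zero.1 (by linarith : trianglePerimeter a a c' = 0)
    simp only [dist_self, le_refl]
  · have h := trianglePerimeter_mul_dist_incenterMixer_le a b c c'
    have h' := trianglePerimeter_mul_dist_incenterMixer_le a b c' c
    rw [dist_comm (incenterMixer a b c'), dist_comm c'] at h'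
    refine le_of_mul_le_mul_left ?_ hpos
    linarith

end IncenterMixer

/-- The incenter mixer on a real normed space is `1`-Lipschitz in each variable separately. -/
theorem incenterMixer_lipschitz {X : Type*} [NormedAddCommGroup X] [NormedSpace ℝ X] :
    (∀ a a' b c : X, ‖incenterMixer a b c - incenterMixer a' b c‖ ≤ ‖a - a'‖) ∧
    (∀ a b b' c : X, ‖incenterMixer a b c - incenterMixer a b' c‖ ≤ ‖b - b'‖) ∧
    (∀ a b c c' : X, ‖incenterMixer a b c - incenterMixer a b c'‖ ≤ ‖c - c'‖) := by
  simp only [← dist_eq_norm]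
  refine ⟨fun a a' b c ↦ ?_, fun a b b' c ↦ ?_, dist_incenterMixer_right_le⟩
  · simpa only [incenterMixer_swap_left _ b c, incenterMixer_swap_right b _ c]
      using dist_incenterMixer_right_le b c a a'
  · simpa only [incenterMixer_swap_right a _ c] using dist_incenterMixer_right_le a c b b'
end

section
/- Let X be a real normed space, let σ be the incenter mixer on X, and define the Nagel co-mixer τ : X × X × X → X by τ(a,b,c) = a + b + c - 2σ(a,b,c). Then τ is 1-Lipschitz in each variable separately; in particular, ‖τ(a,b,c) - τ(a,b,c')‖ ≤ ‖c - c'‖ for all a, b, c, c' ∈ X. -/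
/-- The Nagel co-mixer `τ(a,b,c) = a + b + c - 2σ(a,b,c)` on a real normed space. -/
noncomputable def nagelComixer {X : Type*} [NormedAddCommGroup X] [NormedSpace ℝ X]
    (a b c : X) : X :=
  a + b + c - (2 : ℝ) • incenterMixer a b c

lemma abs_add_add_abs_sub {G : Type*} [AddCommGroup G] [LinearOrder G] [IsOrderedAddMonoid G]
    (s t : G) : |s + t| + |s - t| = 2 • max |s| |t| := by
  wlog hst : |t| ≤ |s| generalizing s t
  · rw [add_comm s, abs_sub_comm, max_comm, this t s (le_of_not_ge hst)]
  wlog hs : 0 ≤ s generalizing s t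
  · have := this (-s) (-t) (by simpa only [abs_neg]) (neg_nonneg.mpr (le_of_not_ge hs))
    rwa [← neg_add, ← neg_sub', abs_neg, abs_neg, abs_neg, abs_neg] at this
  obtain ⟨hneg, hpos⟩ := abs_le.mp (hst.trans_eq (abs_of_nonneg hs))
  rw [max_eq_left hst, abs_of_nonneg hs, abs_of_nonneg (neg_le_iff_add_nonneg'.mp hneg),
    abs_of_nonneg (sub_nonneg.mpr hpos)]
  abel

/-- The perimeter of the triangle with vertices `a`, `b` and `c`, the normalizing factor of the
weights in `incenterMixer a b c`; the summands are in the order used there. -/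
def perimeter {α : Type*} [Dist α] (a b c : α) : ℝ :=
  dist b c + dist a c + dist a b

lemma perimeter_nonneg {α : Type*} [PseudoMetricSpace α] (a b c : α) : 0 ≤ perimeter a b c := by
  unfold perimeter
  positivity

lemma perimeter_eq_zero_iff {α : Type*} [MetricSpace α] {a b c : α} :
    perimeter a b c = 0 ↔ a = b ∧ b = c := by
  constructor
  · intro h
    unfold perimeter at h
    have hbc : 0 ≤ dist b c := dist_nonneg
    have hac : 0 ≤ dist a c := dist_nonneg
    have hab : 0 ≤ dist a b := dist_nonneg
    exact ⟨dist_eq_zero.mp (by linarith), dist_eq_zero.mp (by linarith)⟩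
  · rintro ⟨rfl, rfl⟩
    simp only [perimeter, dist_self, add_zero]

lemma perimeter_rotate {α : Type*} [PseudoMetricSpace α] (a b c : α) :
    perimeter a b c = perimeter b c a := by
  unfold perimeter
  rw [dist_comm c a, dist_comm b a, add_rotate]

lemma two_mul_dist_le_perimeter {α : Type*} [PseudoMetricSpace α] (a b c : α) :
    2 * dist a b ≤ perimeter a b c := by
  unfold perimeter
  linarith [dist_triangle_right a b c]

section

variable {X : Type*} [NormedAddCommGroup X] [NormedSpace ℝ X]

lemma perimeter_smul_incenterMixer (a b c : X) :
    perimeter a b c • incenterMixer a b c = dist b c • a + dist a c • b + dist a b • c := by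
  rcases eq_or_ne (perimeter a b c) 0 with h | h
  · obtain ⟨rfl, rfl⟩ := perimeter_eq_zero_iff.mp h
    simp only [h, dist_self, zero_smul, add_zero]
  · rw [incenterMixer, if_neg (mt perimeter_eq_zero_iff.mpr h)]
    simp only [← dist_eq_norm]
    exact smul_inv_smul₀ h _

lemma incenterMixer_rotate (a b c : X) : incenterMixer a b c = incenterMixer b c a := by
  rcases eq_or_ne (perimeter a b c) 0 with h | h
  · obtain ⟨rfl, rfl⟩ := perimeter_eq_zero_iff.mp h
    rfl
  · refine smul_right_injective X h ?_
    calc perimeter a b c • incenterMixer a b c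
        = dist b c • a + dist a c • b + dist a b • c := perimeter_smul_incenterMixer a b c
      _ = dist c a • b + dist b a • c + dist b c • a := by
        rw [dist_comm c a, dist_comm b a, add_rotate]
      _ = perimeter a b c • incenterMixer b c a := by
        rw [perimeter_rotate, perimeter_smul_incenterMixer]

lemma nagelComixer_rotate (a b c : X) : nagelComixer a b c = nagelComixer b c a := by
  rw [nagelComixer, nagelComixer, incenterMixer_rotate, add_rotate]

lemma nagelComixer_self (a : X) : nagelComixer a a a = a := by
  rw [nagelComixer, incenterMixer, if_pos ⟨rfl, rfl⟩]
  module

lemma perimeter_smul_nagelComixer (a b c : X) :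
    perimeter a b c • nagelComixer a b c =
      (perimeter a b c - 2 * dist b c) • a + (perimeter a b c - 2 * dist a c) • b +
        (perimeter a b c - 2 * dist a b) • c := by
  unfold nagelComixer
  linear_combination (norm := module) (-2 : ℝ) • perimeter_smul_incenterMixer a b c

lemma perimeter_smul_nagelComixer_sub_self (a b c : X) :
    perimeter a b c • (nagelComixer a b c - c) =
      (perimeter a b c - 2 * dist b c) • (a - c) + (perimeter a b c - 2 * dist a c) • (b - c) := by
  rw [smul_sub, perimeter_smul_nagelComixer]
  unfold perimeter
  module

lemma perimeter_smul_nagelComixer_sub_nagelComixer (a b c c' : X) :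
    perimeter a b c • (nagelComixer a b c - nagelComixer a b c') =
      ((dist a c - dist a c') - (dist b c - dist b c')) • (a - b) +
        ((dist a c - dist a c') + (dist b c - dist b c')) • (c' - nagelComixer a b c') +
        (perimeter a b c - 2 * dist a b) • (c - c') := by
  have hc := perimeter_smul_nagelComixer a b c
  have hc' := perimeter_smul_nagelComixer a b c'
  unfold perimeter at hc hc' ⊢
  linear_combination (norm := module) hc - hc'

lemma dist_nagelComixer_right_le (a b c : X) : dist (nagelComixer a b c) c ≤ dist a b := by
  rcases (perimeter_nonneg a b c).eq_or_lt with h | hpos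
  · obtain ⟨rfl, rfl⟩ := perimeter_eq_zero_iff.mp h.symm
    rw [nagelComixer_self]
  have hbc : 0 ≤ perimeter a b c - 2 * dist b c := by
    rw [perimeter_rotate]
    exact sub_nonneg.mpr (two_mul_dist_le_perimeter b c a)
  have hac : 0 ≤ perimeter a b c - 2 * dist a c := by
    rw [← perimeter_rotate, dist_comm]
    exact sub_nonneg.mpr (two_mul_dist_le_perimeter c a b)
  refine le_of_mul_le_mul_left ?_ hpos
  calc perimeter a b c * dist (nagelComixer a b c) c
      = ‖perimeter a b c • (nagelComixer a b c - c)‖ := by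
        rw [norm_smul_of_nonneg hpos.le, dist_eq_norm]
    _ ≤ ‖(perimeter a b c - 2 * dist b c) • (a - c)‖ +
          ‖(perimeter a b c - 2 * dist a c) • (b - c)‖ := by
        rw [perimeter_smul_nagelComixer_sub_self]
        exact norm_add_le _ _
    _ = (perimeter a b c - 2 * dist b c) * dist a c +
          (perimeter a b c - 2 * dist a c) * dist b c := by
        rw [norm_smul_of_nonneg hbc, norm_smul_of_nonneg hac, ← dist_eq_norm, ← dist_eq_norm]
    _ = perimeter a b c * dist a b -
          (perimeter a b c - 2 * dist b c) * (perimeter a b c - 2 * dist a c) := by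
        unfold perimeter
        ring
    _ ≤ perimeter a b c * dist a b := sub_le_self _ (mul_nonneg hbc hac)

lemma nagelComixer_self_left (a c : X) : nagelComixer a a c = c :=
  dist_le_zero.mp <| (dist_nagelComixer_right_le a a c).trans_eq (dist_self a)

lemma dist_nagelComixer_nagelComixer_le (a b c c' : X) :
    dist (nagelComixer a b c) (nagelComixer a b c') ≤ dist c c' := by
  rcases (perimeter_nonneg a b c).eq_or_lt with h | hpos
  · obtain ⟨rfl, rfl⟩ := perimeter_eq_zero_iff.mp h.symm
    rw [nagelComixer_self_left, nagelComixer_self_left]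
  set s := dist a c - dist a c'
  set t := dist b c - dist b c'
  have hst : |s - t| + |s + t| ≤ 2 * dist c c' := by
    rw [add_comm, abs_add_add_abs_sub, two_nsmul, ← two_mul]
    gcongr
    exact max_le (dist_dist_dist_le_right a c c') (dist_dist_dist_le_right b c c')
  have hp : 0 ≤ perimeter a b c - 2 * dist a b :=
    sub_nonneg.mpr (two_mul_dist_le_perimeter a b c)
  refine le_of_mul_le_mul_left ?_ hpos
  calc perimeter a b c * dist (nagelComixer a b c) (nagelComixer a b c')
      = ‖perimeter a b c • (nagelComixer a b c - nagelComixer a b c')‖ := by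
        rw [norm_smul_of_nonneg hpos.le, dist_eq_norm]
    _ ≤ ‖(s - t) • (a - b)‖ + ‖(s + t) • (c' - nagelComixer a b c')‖ +
          ‖(perimeter a b c - 2 * dist a b) • (c - c')‖ := by
        rw [perimeter_smul_nagelComixer_sub_nagelComixer]
        exact norm_add₃_le
    _ = |s - t| * dist a b + |s + t| * dist (nagelComixer a b c') c' +
          (perimeter a b c - 2 * dist a b) * dist c c' := by
        rw [norm_smul, norm_smul, norm_smul_of_nonneg hp, Real.norm_eq_abs, Real.norm_eq_abs,
          dist_eq_norm a b, dist_eq_norm c c', dist_eq_norm']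
    _ ≤ |s - t| * dist a b + |s + t| * dist a b +
          (perimeter a b c - 2 * dist a b) * dist c c' := by
        gcongr
        exact dist_nagelComixer_right_le a b c'
    _ = (|s - t| + |s + t|) * dist a b + (perimeter a b c - 2 * dist a b) * dist c c' := by
        rw [add_mul]
    _ ≤ 2 * dist c c' * dist a b + (perimeter a b c - 2 * dist a b) * dist c c' := by
        gcongr
    _ = perimeter a b c * dist c c' := by ring

end

/-- The Nagel co-mixer on a real normed space is `1`-Lipschitz in each variable separately. -/
theorem nagelComixer_lipschitz {X : Type*} [NormedAddCommGroup X] [NormedSpace ℝ X] :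
    (∀ a a' b c : X, ‖nagelComixer a b c - nagelComixer a' b c‖ ≤ ‖a - a'‖) ∧
    (∀ a b b' c : X, ‖nagelComixer a b c - nagelComixer a b' c‖ ≤ ‖b - b'‖) ∧
    (∀ a b c c' : X, ‖nagelComixer a b c - nagelComixer a b c'‖ ≤ ‖c - c'‖) := by
  have lipschitz_right (a b c c' : X) :
      ‖nagelComixer a b c - nagelComixer a b c'‖ ≤ ‖c - c'‖ := by
    simpa only [dist_eq_norm] using dist_nagelComixer_nagelComixer_le a b c c'
  refine ⟨fun a a' b c => ?_, fun a b b' c => ?_, lipschitz_right⟩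
  · rw [nagelComixer_rotate a, nagelComixer_rotate a']
    exact lipschitz_right b c a a'
  · rw [← nagelComixer_rotate c a b, ← nagelComixer_rotate c a b']
    exact lipschitz_right c a b b'
end

section
/- Let (X, d) be a metric space, L ≥ 0, and let σ, τ : X × X × X → X be maps that are symmetric (invariant under all permutations of the three arguments) and L-Lipschitz in each variable separately, with σ satisfying the absorption property σ(a,a,b) = a and τ satisfying the anti-absorption property τ(a,a,b) = b for all a, b ∈ X. Then for all a, b, c, a', b', c' ∈ X, the Hausdorff distance satisfies d_H({σ(a,b,c), τ(a,b,c)}, {σ(a',b',c'), τ(a',b',c')}) ≤ 9L · d_H({a,b,c}, {a',b',c'}). Moreover, if the set {a,b,c} has at most two elements, then {σ(a,b,c), τ(a,b,c)} = {a,b,c}. -/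
/-!
Given triples `v` and `w`, join `i` to `j` when `dist (v i) (w j)` is at most the Hausdorff distance
`r` of their ranges; finiteness leaves no index isolated. By Hall's theorem one of two things
happens.

* There is a perfect matching. By symmetry it may be taken to be the identity, and moving the three
  arguments one at a time costs `3 * L * r`.
* All `v i` with `i ≠ k` are joined to a single `w l`, and `v k` is joined to all `w j` with
  `j ≠ l`. Moving the two points `v i` onto `w l` shows that the mixer at `v` is within `2 * L * r`
  of `w l`, and the co-mixer at `v` within `2 * L * r` of `v k`; at `w` the roles of `w l` and `v k`
  are exchanged. So the mixer on each side is close to the co-mixer on the other.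
-/

open scoped NNReal
open Finset Function Metric

section Hausdorff

variable {X : Type*} [PseudoMetricSpace X]

lemma exists_mem_dist_le_hausdorffDist {s t : Set X} (hs : Bornology.IsBounded s)
    (ht : IsCompact t) (ht₀ : t.Nonempty) {x : X} (hx : x ∈ s) :
    ∃ y ∈ t, dist x y ≤ hausdorffDist s t := by
  obtain ⟨y, hy, hxy⟩ := ht.exists_infDist_eq_dist ht₀ x
  refine ⟨y, hy, hxy ▸ infDist_le_hausdorffDist_of_mem hx ?_⟩
  exact hausdorffEDist_ne_top_of_nonempty_of_bounded ⟨x, hx⟩ ht₀ hs ht.isBounded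

lemma exists_dist_le_hausdorffDist_range {ι κ : Type*} [Finite ι] [Finite κ] [Nonempty κ]
    (v : ι → X) (w : κ → X) (i : ι) :
    ∃ j, dist (v i) (w j) ≤ hausdorffDist (Set.range v) (Set.range w) := by
  simpa only [Set.exists_range_iff] using
    exists_mem_dist_le_hausdorffDist (Set.finite_range v).isBounded (Set.finite_range w).isCompact
      (Set.range_nonempty w) (Set.mem_range_self i)

lemma hausdorffDist_pair_le {p q p' q' : X} {r : ℝ} (hp : dist p p' ≤ r) (hq : dist q q' ≤ r) :
    hausdorffDist {p, q} {p', q'} ≤ r := by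
  apply hausdorffDist_le_of_mem_dist (dist_nonneg.trans hp)
  · rintro x (rfl | rfl)
    exacts [⟨p', by simp, hp⟩, ⟨q', by simp, hq⟩]
  · rintro x (rfl | rfl)
    exacts [⟨p, by simp, by rwa [dist_comm]⟩, ⟨q, by simp, by rwa [dist_comm]⟩]

end Hausdorff

section Triples

lemma exists_equiv_or_exists_double_star {α β : Type*} [Fintype α] [Fintype β]
    (hα : Fintype.card α = 3) (hβ : Fintype.card β = 3) {R : α → β → Prop}
    (hR : ∀ i, ∃ j, R i j) (hR' : ∀ j, ∃ i, R i j) :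
    (∃ e : α ≃ β, ∀ i, R i (e i)) ∨ ∃ k l, (∀ i ≠ k, R i l) ∧ ∀ j ≠ l, R k j := by
  classical
  by_cases hall : ∀ s : Finset α, #s ≤ #{j | ∃ i ∈ s, R i j}
  · obtain ⟨f, hf, hRf⟩ :=
      (Fintype.all_card_le_filter_rel_iff_exists_injective R).1 hall
    have hbij := (Fintype.bijective_iff_injective_and_card f).2 ⟨hf, hα.trans hβ.symm⟩
    exact .inl ⟨.ofBijective f hbij, hRf⟩
  · push Not at hall
    obtain ⟨s, hs⟩ := hall
    -- The violator `s` turns out to have two elements and a single neighbour.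
    set N : Finset β := {j | ∃ i ∈ s, R i j} with hN
    have mem_N {i j} (hi : i ∈ s) (hij : R i j) : j ∈ N := by simpa [hN] using ⟨i, hi, hij⟩
    obtain ⟨i₀, hi₀⟩ : s.Nonempty := card_pos.1 (by lia)
    have hN_pos : 0 < #N := let ⟨j, hj⟩ := hR i₀; card_pos.2 ⟨j, mem_N hi₀ hj⟩
    have hs_ne : s ≠ univ := by
      rintro rfl
      have hN_univ : N = univ := by simpa [hN] using hR'
      simp [hN_univ, hα, hβ] at hs
    have hs_lt : #s < 3 := hα ▸ (card_lt_iff_ne_univ s).2 hs_ne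
    obtain ⟨l, hl⟩ : ∃ l, N = {l} := card_eq_one.1 (by lia)
    obtain ⟨k, hk⟩ : ∃ k, sᶜ = {k} := card_eq_one.1 (by rw [card_compl]; lia)
    have mem_s {i} : i ∈ s ↔ i ≠ k := by simpa using (not_congr (Finset.ext_iff.1 hk i))
    refine .inr ⟨k, l, fun i hi => ?_, fun j hj => ?_⟩
    · obtain ⟨j, hij⟩ := hR i
      have hjl : j = l := by simpa [hl] using mem_N (mem_s.2 hi) hij
      rwa [← hjl]
    · obtain ⟨i, hij⟩ := hR' j
      have hik : i = k := by
        by_contra hi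
        exact hj (by simpa [hl] using mem_N (mem_s.2 hi) hij)
      rwa [← hik]

lemma exists_forall_ne_eq_of_not_injective {α β : Type*} [Fintype α] (hα : Fintype.card α = 3)
    {v : α → β} (hv : ¬ Injective v) : ∃ j k, j ≠ k ∧ ∀ i ≠ k, v i = v j := by
  classical
  simp only [Injective, not_forall] at hv
  obtain ⟨i, j, hij, hne⟩ := hv
  obtain ⟨k, hk⟩ : ∃ k, ({i, j} : Finset α)ᶜ = {k} :=
    card_eq_one.1 (by rw [card_compl, card_pair hne, hα])
  have hk' (l : α) : l ≠ i ∧ l ≠ j ↔ l = k := by simpa using Finset.ext_iff.1 hk l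
  refine ⟨j, k, ((hk' k).2 rfl).2.symm, fun l hl => ?_⟩
  have hl_mem : l = i ∨ l = j := by
    by_contra! h
    exact hl ((hk' l).1 h)
  rcases hl_mem with rfl | rfl
  exacts [hij, rfl]

end Triples

section Mixers

variable {ι X Y : Type*}

/-- A symmetric operation on `ι`-indexed tuples: reindexing the arguments does not change the
value. -/
def PermInvariant (F : (ι → X) → Y) : Prop :=
  ∀ (v : ι → X) (e : Equiv.Perm ι), F (v ∘ e) = F v

/-- A map on `ι`-indexed tuples that is `L`-Lipschitz in each variable separately. -/
def SeparatelyLipschitz [DecidableEq ι] [PseudoMetricSpace X] [PseudoMetricSpace Y] (L : ℝ≥0)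
    (F : (ι → X) → Y) : Prop :=
  ∀ (v : ι → X) (i : ι), LipschitzWith L fun x => F (update v i x)

/-- A mixer with arguments indexed by `ι`: a value taken by all arguments but at most one is the
value of the operation. For three arguments this is the absorption property in each position. -/
def IsMixer (F : (ι → X) → X) : Prop :=
  ∀ ⦃v : ι → X⦄ ⦃k : ι⦄ ⦃x : X⦄, (∀ i ≠ k, v i = x) → F v = x

/-- A co-mixer with arguments indexed by `ι`: if all arguments but one agree, the operation returns
the exceptional one. For three arguments this is the anti-absorption property in each position. -/
def IsComixer (F : (ι → X) → X) : Prop :=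
  ∀ ⦃v : ι → X⦄ ⦃k : ι⦄ ⦃x : X⦄, (∀ i ≠ k, v i = x) → F v = v k

lemma IsMixer.pair_eq_range {F G : (ι → X) → X} (hF : IsMixer F) (hG : IsComixer G) {v : ι → X}
    {j k : ι} (hjk : j ≠ k) (hv : ∀ i ≠ k, v i = v j) : {F v, G v} = Set.range v := by
  rw [hF hv, hG hv]
  refine Set.Subset.antisymm (Set.pair_subset ⟨j, rfl⟩ ⟨k, rfl⟩) ?_
  rintro _ ⟨i, rfl⟩
  obtain rfl | hi := eq_or_ne i k
  exacts [.inr rfl, .inl (hv i hi)]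

variable [DecidableEq ι] [PseudoMetricSpace X] [PseudoMetricSpace Y] {L : ℝ≥0}
  {v w : ι → X} {k l : ι} {x : X} {r : ℝ}

lemma SeparatelyLipschitz.dist_le_mul_card {F : (ι → X) → Y} (hF : SeparatelyLipschitz L F)
    (s : Finset ι) (hs : ∀ i ∈ s, dist (v i) (w i) ≤ r) (hs' : ∀ i ∉ s, v i = w i) :
    dist (F v) (F w) ≤ L * (#s * r) := by
  induction s using Finset.induction_on generalizing v with
  | empty => simp [funext fun i => hs' i (notMem_empty i)]
  | insert i s hi ih =>
    have hstep : dist (F v) (F (update v i (w i))) ≤ L * r := by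
      calc dist (F v) (F (update v i (w i))) ≤ L * dist (v i) (w i) := by
            simpa using (hF v i).dist_le_mul (v i) (w i)
        _ ≤ L * r := by gcongr; exact hs i (mem_insert_self i s)
    have hrest : dist (F (update v i (w i))) (F w) ≤ L * (#s * r) := by
      apply ih <;> grind
    calc dist (F v) (F w) ≤ L * r + L * (#s * r) :=
          (dist_triangle _ _ _).trans (add_le_add hstep hrest)
      _ = L * (#(insert i s) * r) := by rw [card_insert_of_notMem hi]; push_cast; ring

variable [Fintype ι]

lemma SeparatelyLipschitz.dist_update_const_le {F : (ι → X) → Y} (hF : SeparatelyLipschitz L F)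
    (hx : ∀ i ≠ k, dist (v i) x ≤ r) :
    dist (F v) (F (update (fun _ => x) k (v k))) ≤ L * ((Fintype.card ι - 1 : ℕ) * r) := by
  have hcard : #({k}ᶜ : Finset ι) = Fintype.card ι - 1 := by rw [card_compl, card_singleton]
  rw [← hcard]
  apply hF.dist_le_mul_card
  · intro i hi
    have hik : i ≠ k := by simpa using hi
    simpa [hik] using hx i hik
  · intro i hi
    obtain rfl : i = k := by simpa using hi
    simp

variable {F G : (ι → X) → X}

lemma IsMixer.dist_le (hF : IsMixer F) (hFL : SeparatelyLipschitz L F)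
    (hx : ∀ i ≠ k, dist (v i) x ≤ r) : dist (F v) x ≤ L * ((Fintype.card ι - 1 : ℕ) * r) := by
  have hval : F (update (fun _ => x) k (v k)) = x := hF fun i hi => update_of_ne hi _ _
  simpa only [hval] using hFL.dist_update_const_le hx

lemma IsComixer.dist_le (hG : IsComixer G) (hGL : SeparatelyLipschitz L G)
    (hx : ∀ i ≠ k, dist (v i) x ≤ r) :
    dist (G v) (v k) ≤ L * ((Fintype.card ι - 1 : ℕ) * r) := by
  have hval : G (update (fun _ => x) k (v k)) = v k := by
    rw [hG fun i hi => update_of_ne hi _ _, update_self]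
  simpa only [hval] using hGL.dist_update_const_le hx

lemma hausdorffDist_pair_le_of_matching (hF : PermInvariant F) (hG : PermInvariant G)
    (hFL : SeparatelyLipschitz L F) (hGL : SeparatelyLipschitz L G) {e : Equiv.Perm ι}
    (he : ∀ i, dist (v i) (w (e i)) ≤ r) :
    hausdorffDist {F v, G v} {F w, G w} ≤ L * (Fintype.card ι * r) := by
  rw [← hF w e, ← hG w e]
  exact hausdorffDist_pair_le (hFL.dist_le_mul_card univ (by simpa using he) (by simp))
    (hGL.dist_le_mul_card univ (by simpa using he) (by simp))

lemma hausdorffDist_pair_le_of_double_star (hF : IsMixer F) (hG : IsComixer G)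
    (hFL : SeparatelyLipschitz L F) (hGL : SeparatelyLipschitz L G)
    (hv : ∀ i ≠ k, dist (v i) (w l) ≤ r) (hw : ∀ j ≠ l, dist (v k) (w j) ≤ r) :
    hausdorffDist {F v, G v} {F w, G w} ≤ 2 * (L * ((Fintype.card ι - 1 : ℕ) * r)) := by
  simp only [dist_comm (v k)] at hw
  rw [Set.pair_comm (F w), two_mul]
  exact hausdorffDist_pair_le
    ((dist_triangle_right _ _ (w l)).trans (add_le_add (hF.dist_le hFL hv) (hG.dist_le hGL hw)))
    ((dist_triangle_right _ _ (v k)).trans (add_le_add (hG.dist_le hGL hv) (hF.dist_le hFL hw)))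

theorem retraction_from_mixer_comixer_general (hι : Fintype.card ι = 3)
    (hFs : PermInvariant F) (hGs : PermInvariant G) (hFL : SeparatelyLipschitz L F)
    (hGL : SeparatelyLipschitz L G) (hF : IsMixer F) (hG : IsComixer G) :
    (∀ v w : ι → X, hausdorffDist {F v, G v} {F w, G w} ≤
      4 * L * hausdorffDist (Set.range v) (Set.range w)) ∧
    ∀ v : ι → X, ¬ Injective v → {F v, G v} = Set.range v := by
  refine ⟨fun v w => ?_, fun v hv => ?_⟩
  · have : Nonempty ι := Fintype.card_pos_iff.1 (by lia)
    set r := hausdorffDist (Set.range v) (Set.range w) with hr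
    have hLr : 0 ≤ L * r := mul_nonneg L.2 hausdorffDist_nonneg
    have hvw (i : ι) : ∃ j, dist (v i) (w j) ≤ r := exists_dist_le_hausdorffDist_range v w i
    have hwv (j : ι) : ∃ i, dist (v i) (w j) ≤ r := by
      simpa only [hr, dist_comm, hausdorffDist_comm] using exists_dist_le_hausdorffDist_range w v j
    obtain ⟨e, he⟩ | ⟨k, l, hk, hl⟩ := exists_equiv_or_exists_double_star hι hι hvw hwv
    · refine (hausdorffDist_pair_le_of_matching hFs hGs hFL hGL he).trans ?_
      rw [hι]
      push_cast
      linarith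
    · refine (hausdorffDist_pair_le_of_double_star hF hG hFL hGL hk hl).trans_eq ?_
      rw [hι]
      push_cast
      ring
  · obtain ⟨j, k, hjk, hk⟩ := exists_forall_ne_eq_of_not_injective hι hv
    exact hF.pair_eq_range hG hjk hk

end Mixers

section Ternary

variable {X Y : Type*}

/-- A ternary operation, regarded as an operation on triples indexed by `Fin 3`. -/
def onTriples (f : X → X → X → Y) (v : Fin 3 → X) : Y := f (v 0) (v 1) (v 2)

lemma permInvariant_onTriples {f : X → X → X → Y} (h₀₁ : ∀ a b c, f a b c = f b a c)
    (h₁₂ : ∀ a b c, f a b c = f a c b) : PermInvariant (onTriples f) := by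
  intro v e
  have hdistinct : e 0 ≠ e 1 ∧ e 0 ≠ e 2 ∧ e 1 ≠ e 2 := by simp
  simp only [onTriples, comp_apply]
  generalize e 0 = i, e 1 = j, e 2 = k at hdistinct ⊢
  fin_cases i <;> fin_cases j <;> fin_cases k <;> grind

lemma separatelyLipschitz_onTriples [PseudoMetricSpace X] [PseudoMetricSpace Y] {L : ℝ≥0}
    {f : X → X → X → Y} (h₀ : ∀ b c, LipschitzWith L fun a => f a b c)
    (h₁ : ∀ a c, LipschitzWith L fun b => f a b c)
    (h₂ : ∀ a b, LipschitzWith L fun c => f a b c) : SeparatelyLipschitz L (onTriples f) := by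
  intro v i
  fin_cases i
  exacts [h₀ (v 1) (v 2), h₁ (v 0) (v 2), h₂ (v 0) (v 1)]

lemma isMixer_onTriples {σ : X → X → X → X} (h₀₁ : ∀ a b c, σ a b c = σ b a c)
    (h₁₂ : ∀ a b c, σ a b c = σ a c b) (habs : ∀ a b, σ a a b = a) : IsMixer (onTriples σ) := by
  intro v k x hv
  fin_cases k <;> simp only [onTriples] <;> grind

lemma isComixer_onTriples {τ : X → X → X → X} (h₀₁ : ∀ a b c, τ a b c = τ b a c)
    (h₁₂ : ∀ a b c, τ a b c = τ a c b) (habs : ∀ a b, τ a a b = b) :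
    IsComixer (onTriples τ) := by
  intro v k x hv
  fin_cases k <;> simp only [onTriples] <;> grind

lemma range_vec3 (a b c : X) : Set.range ![a, b, c] = {a, b, c} := by
  simp only [Matrix.range_cons, Matrix.range_empty, Set.union_empty, Set.singleton_union]

lemma not_injective_vec3 {a b c : X} (h : a = b ∨ a = c ∨ b = c) : ¬ Injective ![a, b, c] := by
  intro hinj
  rcases h with h | h | h
  · exact absurd (@hinj 0 1 h) (by decide)
  · exact absurd (@hinj 0 2 h) (by decide)
  · exact absurd (@hinj 1 2 h) (by decide)

end Ternary

/-- Given a symmetric mixer `σ` and a symmetric co-mixer `τ` on a metric space, both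
`L`-Lipschitz in each variable separately, the map `{a,b,c} ↦ {σ(a,b,c), τ(a,b,c)}` is a
`9L`-Lipschitz retraction (in the Hausdorff metric) from triples onto pairs. -/
theorem retraction_from_mixer_comixer {X : Type*} [MetricSpace X] (L : ℝ≥0)
    (σ τ : X → X → X → X)
    (hσsymm : ∀ a b c : X, σ a b c = σ a c b ∧ σ a b c = σ b a c ∧ σ a b c = σ b c a ∧
      σ a b c = σ c a b ∧ σ a b c = σ c b a)
    (hτsymm : ∀ a b c : X, τ a b c = τ a c b ∧ τ a b c = τ b a c ∧ τ a b c = τ b c a ∧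
      τ a b c = τ c a b ∧ τ a b c = τ c b a)
    (hσlip1 : ∀ b c : X, LipschitzWith L fun a => σ a b c)
    (hσlip2 : ∀ a c : X, LipschitzWith L fun b => σ a b c)
    (hσlip3 : ∀ a b : X, LipschitzWith L fun c => σ a b c)
    (hτlip1 : ∀ b c : X, LipschitzWith L fun a => τ a b c)
    (hτlip2 : ∀ a c : X, LipschitzWith L fun b => τ a b c)
    (hτlip3 : ∀ a b : X, LipschitzWith L fun c => τ a b c)
    (hσabs : ∀ a b : X, σ a a b = a)
    (hτabs : ∀ a b : X, τ a a b = b) :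
    (∀ a b c a' b' c' : X,
      Metric.hausdorffDist ({σ a b c, τ a b c} : Set X) ({σ a' b' c', τ a' b' c'} : Set X) ≤
        9 * L * Metric.hausdorffDist ({a, b, c} : Set X) ({a', b', c'} : Set X)) ∧
    (∀ a b c : X, (a = b ∨ a = c ∨ b = c) →
      ({σ a b c, τ a b c} : Set X) = ({a, b, c} : Set X)) := by
  have hσ₀₁ (a b c : X) : σ a b c = σ b a c := (hσsymm a b c).2.1
  have hσ₁₂ (a b c : X) : σ a b c = σ a c b := (hσsymm a b c).1
  have hτ₀₁ (a b c : X) : τ a b c = τ b a c := (hτsymm a b c).2.1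
  have hτ₁₂ (a b c : X) : τ a b c = τ a c b := (hτsymm a b c).1
  obtain ⟨hlip, hretr⟩ := retraction_from_mixer_comixer_general (Fintype.card_fin 3)
    (permInvariant_onTriples hσ₀₁ hσ₁₂) (permInvariant_onTriples hτ₀₁ hτ₁₂)
    (separatelyLipschitz_onTriples hσlip1 hσlip2 hσlip3)
    (separatelyLipschitz_onTriples hτlip1 hτlip2 hτlip3)
    (isMixer_onTriples hσ₀₁ hσ₁₂ hσabs) (isComixer_onTriples hτ₀₁ hτ₁₂ hτabs)
  refine ⟨fun a b c a' b' c' => ?_, fun a b c h => ?_⟩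
  · rw [← range_vec3 a b c, ← range_vec3 a' b' c']
    refine (hlip ![a, b, c] ![a', b', c']).trans ?_
    gcongr
    · exact hausdorffDist_nonneg
    · norm_num
  · exact (hretr _ (not_injective_vec3 h)).trans (range_vec3 a b c)
end
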